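/- Let ρ ∈ K_2 with v_2(ρ) = b_2. Then Ψ_1^p·ρ ≡ (σ_1^p − 1)·ρ ≡ Ψ_2·ρ mod 𝔐_2^{p^2·e_0 + p·b_1 − (p−1)·b_2}. Consequently, for all 0 ≤ r ≤ p−1 and 0 ≤ s ≤ p−1, Ψ_1^{p+r}·Ψ_2^s·ρ ≡ Ψ_1^r·Ψ_2^{s+1}·ρ mod 𝔐_2^{p^2·e_0 + (r+1)·p·b_1 − (p−1−s)·b_2}. -/

import Mathlib

/-!
Write `E = p ^ 2 * e₀` for the valuation of `p` in `K₂`, so that multiplication by `p` raises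
valuations by `E`. Since `(Ψ₂ + 1) ^ p = σ₁ ^ p ^ 2 = 1`, the operator `Ψ₂ ^ p` is `p` times a
polynomial in `Ψ₂` without constant term, and hence raises valuations by `E + b₂`. The truncated
power `S = ∑ i < p, C(μ, i) Ψ₂ ^ i` commutes with `σ₁`, and modulo `p` its `p`-th power is
`∑ i < p, C(μ, i) ^ p Ψ₂ ^ (p * i)`, in which every term but the first raises valuations by at
least `E + b₂ - p ^ 3 * m`. Modulo `p` one therefore has
`Ψ₁ ^ p = (σ₁ * S - 1) ^ p ≡ σ₁ ^ p * S ^ p - 1 ≡ σ₁ ^ p - 1 = Ψ₂`.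

That `σ₁` preserves valuations and that `Ψ₂` raises them by `b₂` is read off the basis
`x₁ ^ i * Y ^ j` with `Y = x₂ - μ * x₁`: the valuations of its members are incongruent modulo
`p ^ 2`, so it is orthogonal for `v₂`. There `σ₁ ^ p` fixes `x₁`, because it moves `x₁` to a
congruent root of the same Artin–Schreier equation, and it moves `x₂` by an integral element,
because the Witt defects `D(x₁ + i, 1)` have an integral telescoping sum.
-/

/-- A normalized discrete valuation on a field `K`, recorded as a function
`v : K → ℤ`.  The value of `v` at `0` is irrelevant: all conditions below only
refer to nonzero elements (the convention `v 0 = ∞` being understood). -/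
structure IsDiscVal {K : Type*} [Field K] (v : K → ℤ) : Prop where
  map_one : v 1 = 0
  map_mul : ∀ x y : K, x ≠ 0 → y ≠ 0 → v (x * y) = v x + v y
  min_le_add : ∀ x y : K, x ≠ 0 → y ≠ 0 → x + y ≠ 0 → min (v x) (v y) ≤ v (x + y)
  exists_uniformizer : ∃ π : K, π ≠ 0 ∧ v π = 1

section MaxIdealPow

variable {L : Type*} [Field L]

/-- The `N`-th power `𝔐 ^ N` of the maximal ideal of a discrete valuation, `N` being any integer,
so that congruences modulo `𝔐 ^ N` are membership statements. -/
def maxIdealPow (w : AddValuation L (WithTop ℤ)) (N : ℤ) : AddSubgroup L where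
  carrier := {x | (N : WithTop ℤ) ≤ w x}
  zero_mem' := by simp only [Set.mem_ofPred_eq, w.map_zero, le_top]
  add_mem' := w.map_le_add
  neg_mem' {x} hx := by simpa only [Set.mem_ofPred_eq, w.map_neg] using hx

variable {w : AddValuation L (WithTop ℤ)} {M N : ℤ} {x y : L}

theorem mem_maxIdealPow : x ∈ maxIdealPow w N ↔ (N : WithTop ℤ) ≤ w x :=
  Iff.rfl

theorem mem_maxIdealPow_of_map_eq (hx : w x = N) : x ∈ maxIdealPow w N :=
  hx.ge

theorem maxIdealPow_antitone (w : AddValuation L (WithTop ℤ)) : Antitone (maxIdealPow w) :=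
  fun _ _ h _ hx => (WithTop.coe_le_coe.2 h).trans (mem_maxIdealPow.1 hx)

theorem one_mem_maxIdealPow_zero : (1 : L) ∈ maxIdealPow w 0 :=
  mem_maxIdealPow_of_map_eq w.map_one

theorem mul_mem_maxIdealPow (hx : x ∈ maxIdealPow w M) (hy : y ∈ maxIdealPow w N) :
    x * y ∈ maxIdealPow w (M + N) := by
  rw [mem_maxIdealPow, w.map_mul, WithTop.coe_add]
  exact add_le_add hx hy

theorem pow_mem_maxIdealPow (hx : x ∈ maxIdealPow w N) (n : ℕ) :
    x ^ n ∈ maxIdealPow w (n * N) := by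
  rw [mem_maxIdealPow, w.map_pow, ← nsmul_eq_mul, WithTop.coe_nsmul]
  exact nsmul_le_nsmul_right hx n

theorem natCast_mem_maxIdealPow_zero (n : ℕ) : (n : L) ∈ maxIdealPow w 0 := by
  rw [← nsmul_one]
  exact nsmul_mem one_mem_maxIdealPow_zero n

theorem intCast_mem_maxIdealPow_zero (n : ℤ) : (n : L) ∈ maxIdealPow w 0 := by
  rw [← zsmul_one]
  exact zsmul_mem one_mem_maxIdealPow_zero n

theorem map_add_eq_of_mem_maxIdealPow (hx : w x = N) (hy : y ∈ maxIdealPow w (N + 1)) :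
    w (x + y) = N := by
  rw [w.map_add_eq_of_lt_left, hx]
  rw [hx]
  exact (WithTop.coe_lt_coe.2 (lt_add_one N)).trans_le hy

theorem pow_sub_pow_mem_maxIdealPow (hN : N ≤ 0) (hx : x ∈ maxIdealPow w N)
    (hy : y ∈ maxIdealPow w N) (hxy : x - y ∈ maxIdealPow w M) {k n : ℕ} (hk : k ≤ n) :
    x ^ k - y ^ k ∈ maxIdealPow w (M + n * N) := by
  rw [← geom_sum₂_mul, add_comm]
  refine mul_mem_maxIdealPow (sum_mem fun i hi => ?_) hxy
  have hik : i + (k - 1 - i) ≤ n := by grind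
  refine maxIdealPow_antitone w ?_
    (mul_mem_maxIdealPow (pow_mem_maxIdealPow hx i) (pow_mem_maxIdealPow hy (k - 1 - i)))
  rw [← add_mul, ← Nat.cast_add]
  exact mul_le_mul_of_nonpos_right (mod_cast hik) hN

end MaxIdealPow

section Binomial

variable {K : Type*} [Field K] {v : AddValuation K (WithTop ℤ)} {p : ℕ}

theorem map_natCast_eq_zero_of_coprime (hp : 0 < v (p : K)) {k : ℕ} (hk : k.Coprime p) :
    v (k : K) = 0 := by
  refine le_antisymm (not_lt.1 fun hpos => ?_) (natCast_mem_maxIdealPow_zero k)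
  obtain ⟨r, s, hrs⟩ := Nat.isCoprime_iff_coprime.2 hk
  have hbezout : (r : K) * k + s * p = 1 := mod_cast congrArg (Int.cast : ℤ → K) hrs
  have hone : 0 < v ((r : K) * k + s * p) := by
    refine v.map_lt_add ?_ ?_ <;> rw [v.map_mul]
    · exact hpos.trans_le (le_add_of_nonneg_left (intCast_mem_maxIdealPow_zero r))
    · exact hp.trans_le (le_add_of_nonneg_left (intCast_mem_maxIdealPow_zero s))
  rw [hbezout, v.map_one] at hone
  exact hone.false

theorem inv_factorial_mem_maxIdealPow_zero (hpp : p.Prime) (hp : 0 < v (p : K)) {i : ℕ}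
    (hi : i < p) : (i.factorial : K)⁻¹ ∈ maxIdealPow v 0 := by
  have hcop : i.factorial.Coprime p :=
    ((hpp.coprime_iff_not_dvd).2 fun hdvd => hi.not_ge (hpp.dvd_factorial.1 hdvd)).symm
  rw [mem_maxIdealPow, v.map_inv, map_natCast_eq_zero_of_coprime hp hcop]
  simp

theorem prod_sub_natCast_div_factorial_mem_maxIdealPow (hpp : p.Prime) (hp : 0 < v (p : K))
    {μ : K} {m : ℤ} (hm : 0 ≤ m) (hμ : μ ∈ maxIdealPow v (-m)) {i : ℕ} (hi : i < p) :
    (∏ k ∈ Finset.range i, (μ - (k : K))) / (i.factorial : K) ∈ maxIdealPow v (-(i * m)) := by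
  have hfactor (k : ℕ) : μ - (k : K) ∈ maxIdealPow v (-m) :=
    sub_mem hμ (maxIdealPow_antitone v (by omega) (natCast_mem_maxIdealPow_zero k))
  have hprod (n : ℕ) : ∏ k ∈ Finset.range n, (μ - (k : K)) ∈ maxIdealPow v (-(n * m)) := by
    induction n with
    | zero => simpa using one_mem_maxIdealPow_zero
    | succ n ih =>
      rw [Finset.prod_range_succ]
      exact maxIdealPow_antitone v (by push_cast; linarith) (mul_mem_maxIdealPow ih (hfactor n))
  rw [div_eq_mul_inv, ← add_zero (-(i * m))]
  exact mul_mem_maxIdealPow (hprod i) (inv_factorial_mem_maxIdealPow_zero hpp hp hi)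

end Binomial

section ArtinSchreier

variable {L : Type*} [Field L] {w : AddValuation L (WithTop ℤ)} {n : ℕ} {z : L} {k : ℤ}

theorem map_pow_sub_self (hn : 2 ≤ n) (hz : w z = k) (hk : k < 0) :
    w (z ^ n - z) = ((n * k : ℤ) : WithTop ℤ) := by
  have hpow : w (z ^ n) = ((n * k : ℤ) : WithTop ℤ) := by
    rw [w.map_pow, hz, ← WithTop.coe_nsmul, nsmul_eq_mul]
  have hlt : n * k < k := by nlinarith [Int.ofNat_le.2 hn]
  rw [w.map_sub_eq_of_lt_left, hpow]
  rw [hpow, hz]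
  exact WithTop.coe_lt_coe.2 hlt

theorem mem_maxIdealPow_of_pow_sub_self_mem (hn : 2 ≤ n) (hk : k ≤ 0)
    (hz : z ^ n - z ∈ maxIdealPow w (n * k)) : z ∈ maxIdealPow w k := by
  by_contra hlt
  rw [mem_maxIdealPow, not_le] at hlt
  obtain ⟨l, hl⟩ := WithTop.ne_top_iff_exists.1 hlt.ne_top
  rw [← hl, WithTop.coe_lt_coe] at hlt
  rw [mem_maxIdealPow, map_pow_sub_self hn hl.symm (by omega), WithTop.coe_le_coe] at hz
  nlinarith [Int.ofNat_le.2 hn]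

theorem map_eq_of_map_pow_sub_self_eq (hn : 2 ≤ n) (hk : k < 0)
    (hz : w (z ^ n - z) = ((n * k : ℤ) : WithTop ℤ)) : w z = k := by
  have hneg : w z < 0 := by
    by_contra! hnonneg
    have hint : z ^ n - z ∈ maxIdealPow w 0 :=
      sub_mem (by simpa using pow_mem_maxIdealPow (N := 0) hnonneg n) hnonneg
    rw [mem_maxIdealPow, hz, WithTop.coe_le_coe] at hint
    nlinarith [Int.ofNat_le.2 hn]
  obtain ⟨l, hl⟩ := WithTop.ne_top_iff_exists.1 hneg.ne_top
  rw [← hl] at hneg ⊢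
  rw [map_pow_sub_self hn hl.symm (WithTop.coe_lt_coe.1 hneg), WithTop.coe_inj] at hz
  rw [mul_left_cancel₀ (by omega) hz]

end ArtinSchreier

section WittDefect

variable {L : Type*} [Field L] {p : ℕ} {x y : L}

/-- The polynomial `D(X, Y) = (X ^ p + Y ^ p - (X + Y) ^ p) / p` governing the addition of Witt
vectors of length two. It is evaluated by division in the field, so it is meaningful only when
`p ≠ 0` there. -/
def wittDefect (p : ℕ) (x y : L) : L :=
  (x ^ p + y ^ p - (x + y) ^ p) / p

theorem natCast_mul_wittDefect (hp0 : (p : L) ≠ 0) (x y : L) :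
    p * wittDefect p x y = x ^ p + y ^ p - (x + y) ^ p :=
  mul_div_cancel₀ _ hp0

theorem wittDefect_eq_neg_sum (hp : p.Prime) (hp0 : (p : L) ≠ 0) (x y : L) :
    wittDefect p x y =
      -∑ k ∈ Finset.Ioo 0 p, x ^ k * y ^ (p - k) * ((p.choose k / p : ℕ) : L) := by
  rw [wittDefect, add_pow_prime_eq' hp, sub_add_cancel_left, neg_div, mul_div_cancel_left₀ _ hp0]

theorem sum_range_wittDefect_add_one (x : L) (n : ℕ) :
    ∑ i ∈ Finset.range n, wittDefect p (x + i) 1 = (x ^ p + n - (x + n) ^ p) / p := by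
  induction n with
  | zero => simp
  | succ n ih =>
    rw [Finset.sum_range_succ, ih, wittDefect, ← add_div]
    push_cast
    ring

variable {w : AddValuation L (WithTop ℤ)} {M N C E : ℤ}

theorem wittDefect_mem_maxIdealPow (hp : p.Prime) (hp0 : (p : L) ≠ 0)
    (hx : x ∈ maxIdealPow w M) (hy : y ∈ maxIdealPow w N)
    (hC₁ : C ≤ M + (p - 1) * N) (hC₂ : C ≤ (p - 1) * M + N) :
    wittDefect p x y ∈ maxIdealPow w C := by
  rw [wittDefect_eq_neg_sum hp hp0]
  refine neg_mem (sum_mem fun k hk => ?_)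
  rw [Finset.mem_Ioo] at hk
  refine maxIdealPow_antitone w ?_ (mul_mem_maxIdealPow (mul_mem_maxIdealPow
    (pow_mem_maxIdealPow hx k) (pow_mem_maxIdealPow hy (p - k))) (natCast_mem_maxIdealPow_zero _))
  have hk₁ : (1 : ℤ) ≤ k := mod_cast hk.1
  have hk₂ : (k : ℤ) + 1 ≤ p := mod_cast hk.2
  rw [add_zero, Nat.cast_sub hk.2.le]
  rcases le_total M N with hMN | hMN
  · linarith [mul_nonneg (sub_nonneg.2 hk₂) (sub_nonneg.2 hMN)]
  · linarith [mul_nonneg (sub_nonneg.2 hk₁) (sub_nonneg.2 hMN)]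

theorem wittDefect_one_sub_mem_maxIdealPow (hp : p.Prime) (hp0 : (p : L) ≠ 0) (hN : N ≤ 0)
    (hx : x ∈ maxIdealPow w N) (hy : y ∈ maxIdealPow w N) (hxy : x - y ∈ maxIdealPow w M) :
    wittDefect p x 1 - wittDefect p y 1 ∈ maxIdealPow w (M + p * N) := by
  simp only [wittDefect_eq_neg_sum hp hp0, one_pow, mul_one, neg_sub_neg]
  rw [← neg_sub, ← Finset.sum_sub_distrib]
  refine neg_mem (sum_mem fun k hk => ?_)
  rw [← sub_mul, ← add_zero (M + p * N)]
  exact mul_mem_maxIdealPow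
    (pow_sub_pow_mem_maxIdealPow hN hx hy hxy (Finset.mem_Ioo.1 hk).2.le)
    (natCast_mem_maxIdealPow_zero _)

theorem sum_range_wittDefect_add_one_mem_maxIdealPow (hp : p.Prime) (hp0 : (p : L) ≠ 0)
    (hpE : (p : L) ∈ maxIdealPow w E) (hx : x ∈ maxIdealPow w N) (hN : N ≤ 0)
    (hEN : 0 ≤ E + p * N) :
    ∑ i ∈ Finset.range p, wittDefect p (x + i) 1 ∈ maxIdealPow w 0 := by
  have hp2 : (2 : ℤ) ≤ p := mod_cast hp.two_le
  have hsplit : ∑ i ∈ Finset.range p, wittDefect p (x + i) 1 =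
      wittDefect p x p + 1 - ((p ^ (p - 1) : ℕ) : L) := by
    rw [sum_range_wittDefect_add_one, wittDefect, ← mul_pow_sub_one hp.ne_zero (p : L)]
    push_cast
    field_simp
    ring
  rw [hsplit]
  refine sub_mem (add_mem ?_ one_mem_maxIdealPow_zero) (natCast_mem_maxIdealPow_zero _)
  have hNE : 0 ≤ N + E := by nlinarith
  exact wittDefect_mem_maxIdealPow hp hp0 hx hpE (by nlinarith) (by nlinarith)

theorem eq_of_pow_sub_self_eq (hp : p.Prime) (hp0 : (p : L) ≠ 0)
    (hpE : (p : L) ∈ maxIdealPow w E) (hx : x ∈ maxIdealPow w N) (hN : N ≤ 0)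
    (hEN : 0 < E + (p - 1) * N) (heq : y ^ p - y = x ^ p - x)
    (hclose : y - x ∈ maxIdealPow w 1) : y = x := by
  by_contra hne
  obtain ⟨k, hk⟩ := WithTop.ne_top_iff_exists.1 (w.ne_top_iff.2 (sub_ne_zero.2 hne))
  rw [mem_maxIdealPow, ← hk, WithTop.coe_le_coe] at hclose
  have ht : y - x ∈ maxIdealPow w k := mem_maxIdealPow_of_map_eq hk.symm
  have hp2 : (2 : ℤ) ≤ p := mod_cast hp.two_le
  have hdiff : (y - x) ^ p - p * wittDefect p x (y - x) = y - x := by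
    rw [natCast_mul_wittDefect hp0, add_sub_cancel]
    linear_combination heq
  have hdefect : wittDefect p x (y - x) ∈ maxIdealPow w ((p - 1) * N + k) :=
    wittDefect_mem_maxIdealPow hp hp0 hx ht (by nlinarith) le_rfl
  have hmem : y - x ∈ maxIdealPow w (k + 1) := by
    rw [← hdiff]
    exact sub_mem (maxIdealPow_antitone w (by nlinarith) (pow_mem_maxIdealPow ht p))
      (maxIdealPow_antitone w (by linarith) (mul_mem_maxIdealPow hpE hdefect))
  rw [mem_maxIdealPow, ← hk, WithTop.coe_le_coe] at hmem
  omega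

end WittDefect

section RaisingEnd

variable {K L : Type*} [Field K] [Field L] [Algebra K L] {w : AddValuation L (WithTop ℤ)}
  {g h N : ℤ} {S T : Module.End K L}

/-- The `K`-linear endomorphisms of `L` that raise the valuation `w` by at least `g`. -/
def raisingEnd (K : Type*) [Field K] [Algebra K L] (w : AddValuation L (WithTop ℤ)) (g : ℤ) :
    AddSubgroup (Module.End K L) where
  carrier := {T | ∀ x, w x + g ≤ w (T x)}
  zero_mem' x := by rw [LinearMap.zero_apply, w.map_zero]; exact le_top
  add_mem' hS hT x := w.map_le_add (hS x) (hT x)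
  neg_mem' hT x := by rw [LinearMap.neg_apply, w.map_neg]; exact hT x

theorem apply_mem_maxIdealPow (hT : T ∈ raisingEnd K w g) {x : L} (hx : x ∈ maxIdealPow w N) :
    T x ∈ maxIdealPow w (N + g) := by
  rw [mem_maxIdealPow, WithTop.coe_add]
  exact (add_le_add_left hx _).trans (hT x)

theorem raisingEnd_antitone (K : Type*) [Field K] [Algebra K L]
    (w : AddValuation L (WithTop ℤ)) : Antitone (raisingEnd K w) :=
  fun _ _ hgh _ hT x => (add_le_add_right (WithTop.coe_le_coe.2 hgh) _).trans (hT x)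

theorem one_mem_raisingEnd_zero : (1 : Module.End K L) ∈ raisingEnd K w 0 :=
  fun x => by simp

theorem mul_mem_raisingEnd (hS : S ∈ raisingEnd K w g) (hT : T ∈ raisingEnd K w h) :
    S * T ∈ raisingEnd K w (g + h) := fun x => by
  rw [add_comm g, WithTop.coe_add, ← add_assoc]
  exact (add_le_add_left (hT x) _).trans (hS (T x))

theorem pow_mem_raisingEnd (hT : T ∈ raisingEnd K w g) (n : ℕ) :
    T ^ n ∈ raisingEnd K w (n * g) := by
  induction n with
  | zero => simpa using one_mem_raisingEnd_zero
  | succ n ih =>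
    rw [pow_succ, Nat.cast_succ, add_one_mul]
    exact mul_mem_raisingEnd ih hT

theorem smul_mem_raisingEnd {c : K} (hc : algebraMap K L c ∈ maxIdealPow w g)
    (hT : T ∈ raisingEnd K w h) : c • T ∈ raisingEnd K w (g + h) := fun x => by
  rw [LinearMap.smul_apply, Algebra.smul_def, w.map_mul, WithTop.coe_add, add_left_comm]
  exact add_le_add hc (hT x)

theorem natCast_mul_mem_raisingEnd {n : ℕ} (hn : (n : L) ∈ maxIdealPow w g)
    (hT : T ∈ raisingEnd K w h) : (n : Module.End K L) * T ∈ raisingEnd K w (g + h) := by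
  rw [← nsmul_eq_mul, ← Nat.cast_smul_eq_nsmul K]
  exact smul_mem_raisingEnd (by rwa [map_natCast]) hT

theorem pow_add_mul_pow_sub_mem_raisingEnd {n : ℕ} (hS : S ∈ raisingEnd K w 0)
    (hT : T ∈ raisingEnd K w h) (hST : S ^ n - T ∈ raisingEnd K w g) (r s : ℕ) :
    S ^ (n + r) * T ^ s - S ^ r * T ^ (s + 1) ∈ raisingEnd K w (g + s * h) := by
  have hsplit : S ^ (n + r) * T ^ s - S ^ r * T ^ (s + 1) = S ^ r * ((S ^ n - T) * T ^ s) := by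
    rw [add_comm n, pow_add, pow_succ', sub_mul, mul_sub, mul_assoc]
  rw [hsplit]
  simpa using mul_mem_raisingEnd (pow_mem_raisingEnd hS r)
    (mul_mem_raisingEnd hST (pow_mem_raisingEnd hT s))

/-- The ring of `K`-linear endomorphisms of `L` that never lower the valuation `w`. -/
def nonloweringSubring (K : Type*) [Field K] [Algebra K L] (w : AddValuation L (WithTop ℤ)) :
    Subring (Module.End K L) where
  __ := raisingEnd K w 0
  one_mem' := one_mem_raisingEnd_zero
  mul_mem' := mul_mem_raisingEnd

end RaisingEnd

section Frobenius

variable {R : Type*} [Semiring R] {p : ℕ}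

theorem exists_sum_pow_prime_eq {ι : Type*} (hp : p.Prime) (s : Finset ι) (f : ι → R)
    (hf : ∀ i ∈ s, ∀ j ∈ s, Commute (f i) (f j)) :
    ∃ r, (∑ i ∈ s, f i) ^ p = ∑ i ∈ s, f i ^ p + p * r := by
  classical
  induction s using Finset.induction_on with
  | empty => exact ⟨0, by simp [hp.ne_zero]⟩
  | insert a s ha ih =>
    simp only [Finset.mem_insert, forall_eq_or_imp] at hf
    obtain ⟨r, hr⟩ := ih fun i hi => (hf.2 i hi).2
    have hcomm : Commute (f a) (∑ i ∈ s, f i) := Commute.sum_right _ _ _ hf.1.2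
    obtain ⟨t, ht⟩ := hcomm.exists_add_pow_prime_eq hp
    refine ⟨r + f a * (∑ i ∈ s, f i) * t, ?_⟩
    rw [Finset.sum_insert ha, Finset.sum_insert ha, ht, hr, mul_add]
    simp only [mul_assoc, add_assoc, add_left_comm]

end Frobenius

section TruncatedExponential

variable {K L : Type*} [Field K] [Field L] [Algebra K L] {w : AddValuation L (WithTop ℤ)}
  {p : ℕ} {E b M : ℤ} {s Φ Ψ : Module.End K L} {c : ℕ → K}

theorem exists_mem_raisingEnd_zero_sum_pow_prime_eq (hp : p.Prime) {ι : Type*} (t : Finset ι)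
    {f : ι → Module.End K L} (hf : ∀ i ∈ t, f i ∈ raisingEnd K w 0)
    (hcomm : ∀ i ∈ t, ∀ j ∈ t, Commute (f i) (f j)) :
    ∃ R ∈ raisingEnd K w 0, (∑ i ∈ t, f i) ^ p = ∑ i ∈ t, f i ^ p + p * R := by
  obtain ⟨R, hR⟩ := exists_sum_pow_prime_eq hp t.attach
    (fun i => (⟨f i, hf i i.2⟩ : nonloweringSubring K w))
    fun i _ j _ => Subtype.ext (hcomm i i.2 j j.2)
  refine ⟨R, R.2, ?_⟩
  rw [← Finset.sum_attach t, ← Finset.sum_attach t]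
  simpa using congrArg Subtype.val hR

theorem add_one_pow_prime_sub_mem_raisingEnd (hp : p.Prime) (hpE : (p : L) ∈ maxIdealPow w E)
    (hb : 0 ≤ b) (hΦ : Φ ∈ raisingEnd K w b) :
    (Φ + 1) ^ p - 1 - Φ ^ p ∈ raisingEnd K w (E + b) := by
  let Φ₀ : nonloweringSubring K w := ⟨Φ, raisingEnd_antitone K w hb hΦ⟩
  obtain ⟨R, hR⟩ := (Commute.one_right Φ₀).exists_add_pow_prime_eq hp
  have hbinom : (Φ + 1) ^ p - 1 - Φ ^ p = p * (Φ * R) := by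
    rw [sub_sub, add_comm 1, sub_eq_iff_eq_add', ← mul_assoc]
    simpa [Φ₀] using congrArg Subtype.val hR
  have hΦR : Φ * R ∈ raisingEnd K w b := by
    simpa using mul_mem_raisingEnd hΦ R.2
  rw [hbinom]
  exact natCast_mul_mem_raisingEnd hpE hΦR

theorem pow_prime_mem_raisingEnd_of_add_one_pow_eq_one (hp : p.Prime)
    (hpE : (p : L) ∈ maxIdealPow w E) (hb : 0 ≤ b) (hΨ : Ψ ∈ raisingEnd K w b)
    (hone : (Ψ + 1) ^ p = 1) : Ψ ^ p ∈ raisingEnd K w (E + b) := by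
  simpa [hone] using add_one_pow_prime_sub_mem_raisingEnd hp hpE hb hΨ

theorem smul_pow_mem_raisingEnd_zero (hΨ : Ψ ∈ raisingEnd K w b) (hMb : M ≤ b) {a : K} {i : ℕ}
    (ha : algebraMap K L a ∈ maxIdealPow w (-(i * M))) : a • Ψ ^ i ∈ raisingEnd K w 0 := by
  refine raisingEnd_antitone K w ?_ (smul_mem_raisingEnd ha (pow_mem_raisingEnd hΨ i))
  rw [neg_add_eq_sub, sub_nonneg]
  gcongr

theorem sum_smul_pow_mem_raisingEnd_zero (hΨ : Ψ ∈ raisingEnd K w b) (hMb : M ≤ b)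
    (hc : ∀ i < p, algebraMap K L (c i) ∈ maxIdealPow w (-(i * M))) :
    ∑ i ∈ Finset.range p, c i • Ψ ^ i ∈ raisingEnd K w 0 :=
  sum_mem fun i hi => smul_pow_mem_raisingEnd_zero hΨ hMb (hc i (Finset.mem_range.1 hi))

/-- In characteristic `p` the series `∑ c i • Ψ ^ i` would have `p`-th power
`∑ c i ^ p • (Ψ ^ p) ^ i`, whose constant term is `1`. -/
theorem sum_smul_pow_pow_prime_sub_one_mem_raisingEnd (hp : p.Prime)
    (hpE : (p : L) ∈ maxIdealPow w E) (hΨ : Ψ ∈ raisingEnd K w b)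
    (hΨp : Ψ ^ p ∈ raisingEnd K w (E + b)) (hMb : M ≤ b) (hbM : b ≤ p * M) (hEM : p * M ≤ E + b)
    (hc0 : c 0 = 1) (hc : ∀ i < p, algebraMap K L (c i) ∈ maxIdealPow w (-(i * M))) :
    (∑ i ∈ Finset.range p, c i • Ψ ^ i) ^ p - 1 ∈ raisingEnd K w (E + b - p * M) := by
  have hpow_term : ∀ i ∈ (Finset.range p).erase 0,
      (c i • Ψ ^ i) ^ p ∈ raisingEnd K w (E + b - p * M) := fun i hi => by
    rw [Finset.mem_erase, Finset.mem_range] at hi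
    have hi1 : (1 : ℤ) ≤ i := mod_cast Nat.one_le_iff_ne_zero.2 hi.1
    rw [smul_pow, ← pow_mul, mul_comm i p, pow_mul]
    refine raisingEnd_antitone K w ?_ (smul_mem_raisingEnd (g := p * -(i * M)) ?_
      (pow_mem_raisingEnd hΨp i))
    · nlinarith
    · rw [map_pow]
      exact pow_mem_maxIdealPow (hc i hi.2) p
  obtain ⟨R, hR, heq⟩ := exists_mem_raisingEnd_zero_sum_pow_prime_eq (w := w) hp (Finset.range p)
    (f := fun i => c i • Ψ ^ i)
    (fun i hi => smul_pow_mem_raisingEnd_zero hΨ hMb (hc i (Finset.mem_range.1 hi)))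
    fun i _ j _ => (((Commute.refl Ψ).pow_pow i j).smul_left (c i)).smul_right (c j)
  rw [heq, ← Finset.add_sum_erase _ _ (Finset.mem_range.2 hp.pos), pow_zero, hc0, one_smul,
    one_pow, add_assoc, add_sub_cancel_left]
  exact add_mem (sum_mem hpow_term)
    (raisingEnd_antitone K w (by linarith) (natCast_mul_mem_raisingEnd hpE hR))

theorem mul_sum_smul_pow_sub_one_mem_raisingEnd_zero (hs : s ∈ raisingEnd K w 0)
    (hΨ : Ψ ∈ raisingEnd K w b) (hMb : M ≤ b)
    (hc : ∀ i < p, algebraMap K L (c i) ∈ maxIdealPow w (-(i * M))) :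
    s * (∑ i ∈ Finset.range p, c i • Ψ ^ i) - 1 ∈ raisingEnd K w 0 :=
  sub_mem (by simpa using mul_mem_raisingEnd hs (sum_smul_pow_mem_raisingEnd_zero hΨ hMb hc))
    one_mem_raisingEnd_zero

theorem mul_sum_smul_pow_sub_one_pow_prime_sub_mem_raisingEnd (hp : p.Prime)
    (hpE : (p : L) ∈ maxIdealPow w E) (hone : s ^ p ^ 2 = 1) (hs : s ∈ raisingEnd K w 0)
    (hΨs : Ψ = s ^ p - 1) (hΨ : Ψ ∈ raisingEnd K w b)
    (hMb : M ≤ b) (hbM : b ≤ p * M) (hEM : p * M ≤ E + b)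
    (hc0 : c 0 = 1) (hc : ∀ i < p, algebraMap K L (c i) ∈ maxIdealPow w (-(i * M))) :
    (s * (∑ i ∈ Finset.range p, c i • Ψ ^ i) - 1) ^ p - Ψ ∈
      raisingEnd K w (E + b - p * M) := by
  set S := ∑ i ∈ Finset.range p, c i • Ψ ^ i
  set Φ := s * S - 1 with hΦ
  have hp2 : (2 : ℤ) ≤ p := mod_cast hp.two_le
  have hb : 0 ≤ b := by
    by_contra! hneg
    nlinarith [mul_nonneg (sub_nonneg.2 hp2) (sub_nonneg.2 hMb)]
  have hΨp : Ψ ^ p ∈ raisingEnd K w (E + b) :=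
    pow_prime_mem_raisingEnd_of_add_one_pow_eq_one hp hpE hb hΨ <| by
      rw [hΨs, sub_add_cancel, ← pow_mul, ← sq, hone]
  have hsS : Commute s S := by
    refine Commute.sum_right _ _ _ fun i _ => (Commute.pow_right ?_ i).smul_right _
    rw [hΨs]
    exact ((Commute.refl s).pow_right p).sub_right (Commute.one_right s)
  have hsplit : Φ ^ p - Ψ = s ^ p * (S ^ p - 1) - ((Φ + 1) ^ p - 1 - Φ ^ p) := by
    rw [hΦ, sub_add_cancel, hsS.mul_pow, hΨs, mul_sub, mul_one]
    abel
  have hpow : s ^ p * (S ^ p - 1) ∈ raisingEnd K w (E + b - p * M) := by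
    simpa using mul_mem_raisingEnd (pow_mem_raisingEnd hs p)
      (sum_smul_pow_pow_prime_sub_one_mem_raisingEnd hp hpE hΨ hΨp hMb hbM hEM hc0 hc)
  have hΦ0 : Φ ∈ raisingEnd K w 0 :=
    mul_sum_smul_pow_sub_one_mem_raisingEnd_zero hs hΨ hMb hc
  rw [hsplit]
  exact sub_mem hpow (raisingEnd_antitone K w (by linarith)
    (add_one_pow_prime_sub_mem_raisingEnd hp hpE le_rfl hΦ0))

end TruncatedExponential

section OrthogonalBasis

theorem map_sum_eq_inf_of_pairwise {R Γ ι : Type*} [Ring R] [LinearOrderedAddCommMonoidWithTop Γ]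
    (w : AddValuation R Γ) (s : Finset ι) {f : ι → R}
    (hf : (s : Set ι).Pairwise fun i j => w (f i) = w (f j) → w (f i) = ⊤) :
    w (∑ i ∈ s, f i) = s.inf fun i => w (f i) := by
  classical
  induction s using Finset.induction_on with
  | empty => simp
  | insert a s ha ih =>
    have hs := ih (hf.mono (by simp))
    rw [Finset.sum_insert ha, Finset.inf_insert]
    by_cases heq : w (f a) = w (∑ i ∈ s, f i)
    · have htop : w (f a) = ⊤ := by
        rcases s.eq_empty_or_nonempty with rfl | hne
        · simpa using heq
        · obtain ⟨j, hj, hinf⟩ := Finset.exists_mem_eq_inf s hne fun i => w (f i)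
          exact hf (by simp) (by simp [hj]) (by grind) (heq.trans (hs.trans hinf))
      rw [← hs, ← heq, inf_idem, htop]
      exact top_le_iff.1 (w.map_le_add htop.ge (heq ▸ htop).ge)
    · rw [w.map_add_of_distinct_val heq, hs]

variable {K L ι : Type*} [Field K] [Field L] [Algebra K L] {v : AddValuation K (WithTop ℤ)}
  {w : AddValuation L (WithTop ℤ)} {n : ℕ} {d : ι → ℤ}

theorem map_sum_smul_eq_inf (hram : ∀ a, w (algebraMap K L a) = n • v a) {e : ι → L}
    (he : ∀ i, w (e i) = d i) (hd : ∀ i j, (n : ℤ) ∣ d i - d j → i = j) (s : Finset ι)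
    (c : ι → K) : w (∑ i ∈ s, c i • e i) = s.inf fun i => w (c i • e i) := by
  refine map_sum_eq_inf_of_pairwise w _ fun i _ j _ hij heq => ?_
  by_contra htop
  have hcoeff (i : ι) (hi : w (c i • e i) ≠ ⊤) :
      ∃ k : ℤ, w (c i • e i) = ((n * k + d i : ℤ) : WithTop ℤ) := by
    have hci : c i ≠ 0 := fun h0 => hi (by rw [h0, zero_smul, w.map_zero])
    obtain ⟨k, hk⟩ := WithTop.ne_top_iff_exists.1 (v.ne_top_iff.2 hci)
    refine ⟨k, ?_⟩
    rw [Algebra.smul_def, w.map_mul, hram, he, ← hk]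
    norm_cast
  obtain ⟨k, hk⟩ := hcoeff i htop
  obtain ⟨l, hl⟩ := hcoeff j (heq ▸ htop)
  rw [hk, hl, WithTop.coe_inj] at heq
  exact hij (hd i j ⟨l - k, by linear_combination heq⟩)

theorem linearIndependent_of_map_incongruent (hram : ∀ a, w (algebraMap K L a) = n • v a)
    {e : ι → L} (he : ∀ i, w (e i) = d i) (hd : ∀ i j, (n : ℤ) ∣ d i - d j → i = j) :
    LinearIndependent K e := by
  rw [linearIndependent_iff']
  intro s c hc i hi
  have hinf := map_sum_smul_eq_inf hram he hd s c
  rw [hc, w.map_zero, eq_comm, Finset.inf_eq_top_iff] at hinf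
  have hzero := w.top_iff.1 (hinf i hi)
  exact (smul_eq_zero.1 hzero).resolve_right (w.ne_top_iff.1 (by simp [he]))

theorem mem_raisingEnd_of_basis (hram : ∀ a, w (algebraMap K L a) = n • v a)
    (B : Module.Basis ι K L) (hB : ∀ i, w (B i) = d i)
    (hd : ∀ i j, (n : ℤ) ∣ d i - d j → i = j) {g : ℤ} {T : Module.End K L}
    (hT : ∀ i, w (B i) + g ≤ w (T (B i))) : T ∈ raisingEnd K w g := fun x => by
  have hsum : ∑ i ∈ (B.repr x).support, B.repr x i • B i = x := B.linearCombination_repr x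
  have hx := map_sum_smul_eq_inf hram hB hd (B.repr x).support (B.repr x)
  rw [hsum] at hx
  conv_rhs => rw [← hsum, map_sum]
  refine w.map_le_sum fun i hi => ?_
  calc w x + g ≤ w (B.repr x i • B i) + g := by
        rw [hx]
        exact add_le_add_left (Finset.inf_le hi) _
    _ ≤ w (B.repr x i • T (B i)) := by
        simp only [Algebra.smul_def, w.map_mul, add_assoc]
        exact add_le_add_right (hT i) _
    _ = w (T (B.repr x i • B i)) := by rw [T.map_smul]

theorem prod_fin_eq_of_sq_dvd {p : ℕ} (hp : p.Prime) {s t : ℤ} (hs : ¬ (p : ℤ) ∣ s)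
    (ht : ¬ (p : ℤ) ∣ t) {i j : Fin p × Fin p}
    (h : (p : ℤ) ^ 2 ∣ (i.1 * (p * s) + i.2 * t) - (j.1 * (p * s) + j.2 * t)) : i = j := by
  have hpp : Prime (p : ℤ) := Nat.prime_iff_prime_int.1 hp
  have hfin (k l : Fin p) {u : ℤ} (hu : ¬ (p : ℤ) ∣ u) (hkl : (p : ℤ) ∣ u * (k - l)) : k = l := by
    have hmod := Int.eq_zero_of_abs_lt_dvd ((hpp.dvd_or_dvd hkl).resolve_left hu)
      (by rw [abs_lt]; omega)
    exact Fin.ext (by omega)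
  obtain ⟨q, hq⟩ := h
  have hsnd : i.2 = j.2 := hfin _ _ ht ⟨p * q - s * (i.1 - j.1), by linear_combination hq⟩
  have hfst : i.1 = j.1 := by
    refine hfin _ _ hs ⟨q, mul_left_cancel₀ hpp.ne_zero ?_⟩
    rw [hsnd] at hq
    linear_combination hq
  exact Prod.ext hfst hsnd

end OrthogonalBasis

section Automorphism

variable {L : Type*} [Field L] {w : AddValuation L (WithTop ℤ)} {g A E N : ℤ} {x y : L}

section RingHom

variable {F : Type*} [FunLike F L L] [RingHomClass F L L] {σ : F}

theorem le_map_apply_mul_sub (hg : 0 ≤ g) (hx : w x + g ≤ w (σ x - x))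
    (hy : w y + g ≤ w (σ y - y)) : w (x * y) + g ≤ w (σ (x * y) - x * y) := by
  have hσx : w x ≤ w (σ x) := by
    rw [← sub_add_cancel (σ x) x]
    exact w.map_le_add ((le_add_of_nonneg_right (WithTop.coe_le_coe.2 hg)).trans hx) le_rfl
  have hsplit : σ (x * y) - x * y = σ x * (σ y - y) + (σ x - x) * y := by
    rw [map_mul]
    ring
  rw [hsplit, w.map_mul]
  refine w.map_le_add ?_ ?_ <;> rw [w.map_mul]
  · rw [add_assoc]
    exact add_le_add hσx hy
  · rw [add_right_comm]
    exact add_le_add_left hx _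

theorem le_map_apply_pow_sub (hg : 0 ≤ g) (hx : w x + g ≤ w (σ x - x)) (n : ℕ) :
    w (x ^ n) + g ≤ w (σ (x ^ n) - x ^ n) := by
  induction n with
  | zero => simp
  | succ n ih =>
    rw [pow_succ]
    exact le_map_apply_mul_sub hg ih hx

end RingHom

variable {K : Type*} [Field K] [Algebra K L] {σ : L ≃ₐ[K] L} {p : ℕ}

theorem pow_finrank_eq_one [FiniteDimensional K L] (σ : L ≃ₐ[K] L) :
    σ ^ Module.finrank K L = 1 := by
  have hcard := IntermediateField.finrank_fixedField_eq_card (⊤ : Subgroup (L ≃ₐ[K] L))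
  rw [Subgroup.card_top] at hcard
  rw [← Module.finrank_mul_finrank K (IntermediateField.fixedField (⊤ : Subgroup (L ≃ₐ[K] L))) L,
    hcard, mul_comm, pow_mul, pow_card_eq_one', one_pow]

theorem pow_apply_mem_maxIdealPow (hσ : σ.toLinearMap ∈ raisingEnd K w 0)
    (hx : x ∈ maxIdealPow w N) (n : ℕ) : (σ ^ n) x ∈ maxIdealPow w N := by
  have hpow := apply_mem_maxIdealPow (pow_mem_raisingEnd hσ n) hx
  rwa [mul_zero, add_zero, ← AlgEquiv.pow_toLinearMap] at hpow

theorem pow_apply_sub_self (σ : L ≃ₐ[K] L) (n : ℕ) (y : L) :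
    (σ ^ n) y - y = ∑ i ∈ Finset.range n, (σ ^ i) (σ y - y) := by
  have htel := Finset.sum_range_sub (fun i => (σ ^ i) y) n
  simp only [map_sub, ← AlgEquiv.mul_apply, ← pow_succ]
  rw [htel, pow_zero, AlgEquiv.one_apply]

theorem pow_apply_sub_add_natCast_mem_maxIdealPow (hσ : σ.toLinearMap ∈ raisingEnd K w 0)
    (hx : σ x - x - 1 ∈ maxIdealPow w A) (n : ℕ) : (σ ^ n) x - (x + n) ∈ maxIdealPow w A := by
  have hsum : (σ ^ n) x - (x + n) = ∑ i ∈ Finset.range n, (σ ^ i) (σ x - x - 1) := by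
    simp only [map_sub _ (σ x - x), map_one, Finset.sum_sub_distrib, ← pow_apply_sub_self,
      Finset.sum_const, Finset.card_range, nsmul_one]
    ring
  rw [hsum]
  exact sum_mem fun i _ => pow_apply_mem_maxIdealPow hσ hx i

theorem map_wittDefect (σ : L ≃ₐ[K] L) (x y : L) :
    σ (wittDefect p x y) = wittDefect p (σ x) (σ y) := by
  simp only [wittDefect, map_div₀, map_sub, map_add, map_pow, map_natCast]

/-- Along the orbit of `x` the defects `D(σ ^ i x, 1)` are congruent to `D(x + i, 1)`, and the sum
of the latter telescopes. -/
theorem pow_prime_apply_sub_self_mem_maxIdealPow (hp : p.Prime) (hp0 : (p : L) ≠ 0)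
    (hpE : (p : L) ∈ maxIdealPow w E) (hN : N ≤ 0) (hEN : 0 ≤ E + p * N) (hAN : 0 ≤ A + p * N)
    (hσ : σ.toLinearMap ∈ raisingEnd K w 0) (hx : x ∈ maxIdealPow w N)
    (hσx : σ x - x - 1 ∈ maxIdealPow w A)
    (hσy : σ y - y - wittDefect p x 1 ∈ maxIdealPow w 0) :
    (σ ^ p) y - y ∈ maxIdealPow w 0 := by
  have hdefect (i : ℕ) :
      wittDefect p ((σ ^ i) x) 1 - wittDefect p (x + i) 1 ∈ maxIdealPow w 0 :=
    maxIdealPow_antitone w hAN <| wittDefect_one_sub_mem_maxIdealPow hp hp0 hN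
      (pow_apply_mem_maxIdealPow hσ hx i)
      (add_mem hx (maxIdealPow_antitone w hN (natCast_mem_maxIdealPow_zero i)))
      (pow_apply_sub_add_natCast_mem_maxIdealPow hσ hσx i)
  have hsplit : (σ ^ p) y - y =
      ∑ i ∈ Finset.range p, (σ ^ i) (σ y - y - wittDefect p x 1) +
      (∑ i ∈ Finset.range p, (wittDefect p ((σ ^ i) x) 1 - wittDefect p (x + i) 1) +
        ∑ i ∈ Finset.range p, wittDefect p (x + i) 1) := by
    rw [pow_apply_sub_self, ← Finset.sum_add_distrib, ← Finset.sum_add_distrib]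
    refine Finset.sum_congr rfl fun i _ => ?_
    rw [map_sub _ (σ y - y), map_wittDefect, map_one]
    ring
  rw [hsplit]
  exact add_mem (sum_mem fun i _ => pow_apply_mem_maxIdealPow hσ hσy i)
    (add_mem (sum_mem fun i _ => hdefect i)
      (sum_range_wittDefect_add_one_mem_maxIdealPow hp hp0 hpE hx hN hEN))

end Automorphism

section WittTower

variable {K L : Type*} [Field K] [Field L] [Algebra K L] {v : AddValuation K (WithTop ℤ)}
  {w : AddValuation L (WithTop ℤ)}

theorem algebraMap_mem_maxIdealPow {n : ℕ} (hram : ∀ c, w (algebraMap K L c) = n • v c) {c : K}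
    {N : ℤ} (hc : c ∈ maxIdealPow v N) : algebraMap K L c ∈ maxIdealPow w (n * N) := by
  rw [mem_maxIdealPow, hram, ← nsmul_eq_mul, WithTop.coe_nsmul]
  exact nsmul_le_nsmul_right hc n

theorem two_mul_sq_mul_le_of_break_bounds {p e b m : ℤ} (hp : 2 ≤ p) (hb : 0 < b)
    (hbm : (p ^ 2 - 1) * b < p ^ 2 * m)
    (hme : p ^ 2 * (p - 1) * m + (2 * p * (p - 1) + 1) * b < p ^ 2 * e) :
    2 * (p ^ 2 * b) ≤ p ^ 2 * e := by
  have hm : (p - 1) * ((p ^ 2 - 1) * b) ≤ (p - 1) * (p ^ 2 * m) :=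
    mul_le_mul_of_nonneg_left hbm.le (by linarith)
  have hpb : 0 ≤ (p - 2) * b := mul_nonneg (by linarith) hb.le
  nlinarith [mul_nonneg (sub_nonneg.2 hp) hpb]

/-- A totally ramified extension `L / K` of degree `p ^ 2` containing a Witt vector `(x, y)` of
length two with `℘(x, y) = (a, μ ^ p * a)`, where `v p = e`, `v a = -b` and `v μ = -m`. The last
two fields say that the second upper ramification break is large compared with the first but small
compared with `e`. -/
structure WittTower (p : ℕ) (v : AddValuation K (WithTop ℤ)) (w : AddValuation L (WithTop ℤ))
    (e b m : ℤ) (a μ : K) (x y : L) : Prop where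
  prime : p.Prime
  finrank_eq : Module.finrank K L = p ^ 2
  map_algebraMap : ∀ c : K, w (algebraMap K L c) = (p ^ 2) • v c
  map_p : v (p : K) = e
  map_a : v a = ((-b : ℤ) : WithTop ℤ)
  map_μ : v μ = ((-m : ℤ) : WithTop ℤ)
  b_pos : 0 < b
  not_dvd_b : ¬ (p : ℤ) ∣ b
  x_pow_sub : x ^ p - x = algebraMap K L a
  y_pow_sub : y ^ p - y = algebraMap K L (μ ^ p * a) + wittDefect p x (algebraMap K L a)
  b_lt_m : ((p : ℤ) ^ 2 - 1) * b < (p : ℤ) ^ 2 * m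
  m_lt_e : (p : ℤ) ^ 2 * (p - 1) * m + (2 * p * (p - 1) + 1) * b < (p : ℤ) ^ 2 * e

/-- The generator `y - μ * x` of valuation `-(p ^ 2 * m + b)`: subtracting `μ * x` cancels the
leading term of `y`, leaving a valuation prime to `p`. -/
def reducedGenerator (μ : K) (x y : L) : L :=
  y - algebraMap K L μ * x

/-- The truncated power `(1 + Ψ) ^ [μ] = ∑ i < p, C(μ, i) Ψ ^ i`, whose exponent `μ` is an element
of the base field. -/
def truncatedPow (p : ℕ) (μ : K) (Ψ : Module.End K L) : Module.End K L :=
  ∑ i ∈ Finset.range p, ((∏ k ∈ Finset.range i, (μ - (k : K))) / (i.factorial : K)) • Ψ ^ i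

namespace WittTower

variable {p : ℕ} {e b m : ℤ} {a μ : K} {x y : L} {σ : L ≃ₐ[K] L}

theorem two_le (h : WittTower p v w e b m a μ x y) : (2 : ℤ) ≤ p :=
  mod_cast h.prime.two_le

theorem sq_mul_b_le (h : WittTower p v w e b m a μ x y) :
    (p : ℤ) ^ 2 * b ≤ (p : ℤ) ^ 2 * m + b := by
  linarith [h.b_lt_m]

theorem m_pos (h : WittTower p v w e b m a μ x y) : 0 < m := by
  have hp := h.two_le
  have hpb : 0 < ((p : ℤ) ^ 2 - 1) * b := mul_pos (by nlinarith) h.b_pos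
  exact pos_of_mul_pos_right (hpb.trans h.b_lt_m) (by positivity)

theorem two_mul_sq_mul_b_le (h : WittTower p v w e b m a μ x y) :
    2 * ((p : ℤ) ^ 2 * b) ≤ (p : ℤ) ^ 2 * e :=
  two_mul_sq_mul_le_of_break_bounds h.two_le h.b_pos h.b_lt_m h.m_lt_e

theorem mul_sq_mul_m_le (h : WittTower p v w e b m a μ x y) :
    (p : ℤ) * ((p : ℤ) ^ 2 * m) ≤ (p : ℤ) ^ 2 * e + (p ^ 2 * m + b) := by
  have hpb : 0 ≤ (2 * (p : ℤ) * (p - 1) + 1) * b :=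
    mul_nonneg (by nlinarith [h.two_le]) h.b_pos.le
  linarith [h.m_lt_e, h.b_pos]

theorem e_pos (h : WittTower p v w e b m a μ x y) : 0 < e := by
  have hp := h.two_le
  have hb := h.b_pos
  have he := h.two_mul_sq_mul_b_le
  by_contra! hneg
  nlinarith

theorem natCast_mem (h : WittTower p v w e b m a μ x y) :
    (p : L) ∈ maxIdealPow w ((p : ℤ) ^ 2 * e) := by
  simpa using algebraMap_mem_maxIdealPow h.map_algebraMap
    (mem_maxIdealPow_of_map_eq h.map_p)

theorem natCast_ne_zero (h : WittTower p v w e b m a μ x y) : (p : L) ≠ 0 := by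
  have hp : (p : K) ≠ 0 := v.ne_top_iff.1 (by rw [h.map_p]; exact WithTop.coe_ne_top)
  rwa [← map_natCast (algebraMap K L), map_ne_zero]

theorem map_algebraMap_of_eq (h : WittTower p v w e b m a μ x y) {c : K} {k : ℤ} (hc : v c = k) :
    w (algebraMap K L c) = (((p : ℤ) ^ 2 * k : ℤ) : WithTop ℤ) := by
  rw [h.map_algebraMap, hc, ← WithTop.coe_nsmul, nsmul_eq_mul, Nat.cast_pow]

theorem map_x (h : WittTower p v w e b m a μ x y) : w x = ((-(p * b) : ℤ) : WithTop ℤ) := by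
  have hb : 0 < (p : ℤ) * b := mul_pos (by linarith [h.two_le]) h.b_pos
  refine map_eq_of_map_pow_sub_self_eq h.prime.two_le (by linarith) ?_
  rw [h.x_pow_sub, h.map_algebraMap_of_eq h.map_a]
  congr 1
  ring

theorem wittDefect_x_a_mem (h : WittTower p v w e b m a μ x y) :
    wittDefect p x (algebraMap K L a) ∈
      maxIdealPow w (-(((p : ℤ) ^ 3 - (p : ℤ) ^ 2 + p) * b)) := by
  refine wittDefect_mem_maxIdealPow h.prime h.natCast_ne_zero (mem_maxIdealPow_of_map_eq h.map_x)
    (mem_maxIdealPow_of_map_eq (h.map_algebraMap_of_eq h.map_a)) (by linarith) ?_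
  have hp := h.two_le
  have hfactor : 0 ≤ ((p : ℤ) - 1) * (p - 2) := mul_nonneg (by linarith) (by linarith)
  linarith [mul_nonneg hfactor (mul_nonneg (by linarith : (0 : ℤ) ≤ p) h.b_pos.le)]

theorem μ_mul_mem (h : WittTower p v w e b m a μ x y) {N : ℤ} {z : L} (hz : z ∈ maxIdealPow w N) :
    algebraMap K L μ * z ∈ maxIdealPow w (N - (p : ℤ) ^ 2 * m) :=
  maxIdealPow_antitone w (by linarith) <|
    mul_mem_maxIdealPow (mem_maxIdealPow_of_map_eq (h.map_algebraMap_of_eq h.map_μ)) hz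

theorem y_mem (h : WittTower p v w e b m a μ x y) :
    y ∈ maxIdealPow w (-((p : ℤ) ^ 2 * m + p * b)) := by
  have hp := h.two_le
  have hb := h.b_pos
  have hm := h.m_pos
  refine mem_maxIdealPow_of_pow_sub_self_mem h.prime.two_le (by nlinarith) ?_
  rw [h.y_pow_sub, map_mul, map_pow]
  refine add_mem (maxIdealPow_antitone w ?_ (mul_mem_maxIdealPow (pow_mem_maxIdealPow
    (mem_maxIdealPow_of_map_eq (h.map_algebraMap_of_eq h.map_μ)) p)
    (mem_maxIdealPow_of_map_eq (h.map_algebraMap_of_eq h.map_a))))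
    (maxIdealPow_antitone w ?_ h.wittDefect_x_a_mem)
  · linarith
  · nlinarith [mul_le_mul_of_nonneg_left h.sq_mul_b_le (by linarith : (0 : ℤ) ≤ p),
      mul_nonneg (mul_nonneg (by linarith : (0 : ℤ) ≤ p) (by linarith : (0 : ℤ) ≤ p - 1)) hb.le]

theorem reducedGenerator_pow_sub (h : WittTower p v w e b m a μ x y) :
    reducedGenerator μ x y ^ p - reducedGenerator μ x y =
      -(algebraMap K L μ ^ p * x) + (wittDefect p x (algebraMap K L a) + algebraMap K L μ * x +
        p * wittDefect p (reducedGenerator μ x y) (algebraMap K L μ * x)) := by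
  have hy := h.y_pow_sub
  rw [map_mul, map_pow] at hy
  rw [natCast_mul_wittDefect h.natCast_ne_zero, reducedGenerator, sub_add_cancel]
  linear_combination hy - algebraMap K L μ ^ p * h.x_pow_sub

theorem map_reducedGenerator (h : WittTower p v w e b m a μ x y) :
    w (reducedGenerator μ x y) = ((-((p : ℤ) ^ 2 * m + b) : ℤ) : WithTop ℤ) := by
  have hp := h.two_le
  have hb := h.b_pos
  have hm : 0 < (p : ℤ) ^ 2 * m := by have := h.m_pos; positivity
  have hpm := mul_le_mul_of_nonneg_left h.sq_mul_b_le (by linarith : (0 : ℤ) ≤ p)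
  have hpb : 0 < ((p : ℤ) - 1) * b := mul_pos (by linarith) hb
  have hppb : 0 < (p : ℤ) * ((p - 1) * b) := mul_pos (by linarith) hpb
  have hμx := h.μ_mul_mem (mem_maxIdealPow_of_map_eq h.map_x)
  have hμx' := maxIdealPow_antitone w (by linarith : -((p : ℤ) ^ 2 * m + p * b) ≤ _) hμx
  have hcross := wittDefect_mem_maxIdealPow h.prime h.natCast_ne_zero (sub_mem h.y_mem hμx') hμx'
    (C := -(p * ((p : ℤ) ^ 2 * m + p * b))) (by linarith) (by linarith)
  have hlead : w (-(algebraMap K L μ ^ p * x)) =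
      ((p * -((p : ℤ) ^ 2 * m + b) : ℤ) : WithTop ℤ) := by
    rw [w.map_neg, w.map_mul, w.map_pow, h.map_x, h.map_algebraMap_of_eq h.map_μ]
    norm_cast
    rw [nsmul_eq_mul]
    ring
  refine map_eq_of_map_pow_sub_self_eq h.prime.two_le (by linarith) ?_
  rw [h.reducedGenerator_pow_sub]
  refine map_add_eq_of_mem_maxIdealPow hlead (add_mem (add_mem ?_ ?_) ?_)
  · exact maxIdealPow_antitone w (by nlinarith) h.wittDefect_x_a_mem
  · exact maxIdealPow_antitone w (by nlinarith) hμx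
  · exact maxIdealPow_antitone w (by nlinarith [h.two_mul_sq_mul_b_le])
      (mul_mem_maxIdealPow h.natCast_mem hcross)

theorem reducedGenerator_apply_sub_self (σ : L ≃ₐ[K] L) :
    σ (reducedGenerator μ x y) - reducedGenerator μ x y =
      (σ y - y) - algebraMap K L μ * (σ x - x) := by
  rw [reducedGenerator, map_sub, map_mul, AlgEquiv.commutes]
  ring

theorem sub_one_mem_raisingEnd (h : WittTower p v w e b m a μ x y) {g : ℤ} (hg : 0 ≤ g)
    (hσx : σ x - x ∈ maxIdealPow w (-(p * b) + g))
    (hσY : σ (reducedGenerator μ x y) - reducedGenerator μ x y ∈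
      maxIdealPow w (-((p : ℤ) ^ 2 * m + b) + g)) :
    (σ.toLinearMap : Module.End K L) - 1 ∈ raisingEnd K w g := by
  set Y := reducedGenerator μ x y
  have hval (i : Fin p × Fin p) : w (x ^ (i.1 : ℕ) * Y ^ (i.2 : ℕ)) =
      ((i.1 * (p * -b) + i.2 * -((p : ℤ) ^ 2 * m + b) : ℤ) : WithTop ℤ) := by
    rw [w.map_mul, w.map_pow, w.map_pow, h.map_x, h.map_reducedGenerator, ← mul_neg]
    norm_cast
  have hY : ¬ (p : ℤ) ∣ -((p : ℤ) ^ 2 * m + b) := by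
    rw [dvd_neg, sq, mul_assoc, dvd_add_right (dvd_mul_right _ _)]
    exact h.not_dvd_b
  have hinj (i j : Fin p × Fin p) (hij : ((p ^ 2 : ℕ) : ℤ) ∣
      (i.1 * (p * -b) + i.2 * -((p : ℤ) ^ 2 * m + b)) -
        (j.1 * (p * -b) + j.2 * -((p : ℤ) ^ 2 * m + b))) : i = j := by
    rw [Nat.cast_pow] at hij
    exact prod_fin_eq_of_sq_dvd h.prime (dvd_neg.not.2 h.not_dvd_b) hY hij
  have hcard : Fintype.card (Fin p × Fin p) = Module.finrank K L := by
    rw [h.finrank_eq, Fintype.card_prod, Fintype.card_fin, sq]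
  have : Nonempty (Fin p × Fin p) := ⟨⟨0, h.prime.pos⟩, ⟨0, h.prime.pos⟩⟩
  let B := basisOfLinearIndependentOfCardEqFinrank
    (linearIndependent_of_map_incongruent h.map_algebraMap hval hinj) hcard
  have hB (i) : B i = x ^ (i.1 : ℕ) * Y ^ (i.2 : ℕ) := by simp [B]
  refine mem_raisingEnd_of_basis h.map_algebraMap B (fun i => by rw [hB, hval]) hinj fun i => ?_
  rw [hB, LinearMap.sub_apply, Module.End.one_apply, AlgEquiv.toLinearMap_apply]
  refine le_map_apply_mul_sub hg (le_map_apply_pow_sub hg ?_ _) (le_map_apply_pow_sub hg ?_ _)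
  · rw [h.map_x]
    exact hσx
  · rw [h.map_reducedGenerator]
    exact hσY

theorem apply_x_sub_self_mem (h : WittTower p v w e b m a μ x y)
    (hσx : σ x - x - 1 ∈ maxIdealPow w ((p : ℤ) ^ 2 * b)) : σ x - x ∈ maxIdealPow w 0 := by
  have hb : 0 ≤ (p : ℤ) ^ 2 * b := mul_nonneg (by positivity) h.b_pos.le
  simpa using add_mem (maxIdealPow_antitone w hb hσx) one_mem_maxIdealPow_zero

theorem toLinearMap_mem_raisingEnd_zero (h : WittTower p v w e b m a μ x y)
    (hσx : σ x - x - 1 ∈ maxIdealPow w ((p : ℤ) ^ 2 * b))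
    (hσy : σ y - y - wittDefect p x 1 ∈ maxIdealPow w 0) :
    σ.toLinearMap ∈ raisingEnd K w 0 := by
  have hp := h.two_le
  have hb := h.b_pos
  have hm := h.sq_mul_b_le
  have hpb : 0 ≤ (p : ℤ) * b := by positivity
  have hx := h.apply_x_sub_self_mem hσx
  have hdefect : wittDefect p x 1 ∈ maxIdealPow w (-((p : ℤ) ^ 2 * b)) :=
    wittDefect_mem_maxIdealPow h.prime h.natCast_ne_zero (mem_maxIdealPow_of_map_eq h.map_x)
      one_mem_maxIdealPow_zero (by nlinarith) (by nlinarith)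
  have hsub : (σ.toLinearMap : Module.End K L) - 1 ∈ raisingEnd K w 0 := by
    refine h.sub_one_mem_raisingEnd le_rfl (maxIdealPow_antitone w (by linarith) hx) ?_
    rw [reducedGenerator_apply_sub_self, ← sub_add_cancel (σ y - y) (wittDefect p x 1)]
    exact sub_mem (add_mem (maxIdealPow_antitone w (by nlinarith) hσy)
      (maxIdealPow_antitone w (by linarith) hdefect))
      (maxIdealPow_antitone w (by linarith) (h.μ_mul_mem hx))
  simpa using add_mem hsub one_mem_raisingEnd_zero

theorem pow_prime_apply_x (h : WittTower p v w e b m a μ x y)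
    (hσx : σ x - x - 1 ∈ maxIdealPow w ((p : ℤ) ^ 2 * b))
    (hσ : σ.toLinearMap ∈ raisingEnd K w 0) : (σ ^ p) x = x := by
  have hp := h.two_le
  have hb := h.b_pos
  have he := h.two_mul_sq_mul_b_le
  refine eq_of_pow_sub_self_eq h.prime h.natCast_ne_zero h.natCast_mem
    (mem_maxIdealPow_of_map_eq h.map_x) (by nlinarith) (by nlinarith) ?_ ?_
  · rw [← map_pow, ← map_sub, h.x_pow_sub, AlgEquiv.commutes]
  · have hsub := pow_apply_sub_add_natCast_mem_maxIdealPow hσ hσx p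
    rw [← sub_add_cancel ((σ ^ p) x - x) (p : L), sub_sub]
    exact add_mem (maxIdealPow_antitone w (by nlinarith) hsub)
      (maxIdealPow_antitone w (by nlinarith) h.natCast_mem)

theorem pow_prime_sub_one_mem_raisingEnd (h : WittTower p v w e b m a μ x y)
    (hσx : σ x - x - 1 ∈ maxIdealPow w ((p : ℤ) ^ 2 * b))
    (hσ : σ.toLinearMap ∈ raisingEnd K w 0)
    (hσy : σ y - y - wittDefect p x 1 ∈ maxIdealPow w 0) :
    ((σ ^ p).toLinearMap : Module.End K L) - 1 ∈ raisingEnd K w ((p : ℤ) ^ 2 * m + b) := by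
  have hp := h.two_le
  have hb := h.b_pos
  have he := h.two_mul_sq_mul_b_le
  have hm := h.sq_mul_b_le
  have hx := h.pow_prime_apply_x hσx hσ
  have hpow : (σ ^ p) y - y ∈ maxIdealPow w 0 :=
    pow_prime_apply_sub_self_mem_maxIdealPow h.prime h.natCast_ne_zero h.natCast_mem
      (by nlinarith) (by nlinarith) (by nlinarith) hσ (mem_maxIdealPow_of_map_eq h.map_x) hσx hσy
  refine h.sub_one_mem_raisingEnd (by nlinarith) ?_ ?_
  · rw [hx, sub_self]
    exact zero_mem _
  · rwa [reducedGenerator_apply_sub_self, hx, sub_self, mul_zero, sub_zero, neg_add_cancel]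

theorem coeff_mem (h : WittTower p v w e b m a μ x y) {i : ℕ} (hi : i < p) :
    algebraMap K L ((∏ k ∈ Finset.range i, (μ - (k : K))) / (i.factorial : K)) ∈
      maxIdealPow w (-(i * ((p : ℤ) ^ 2 * m))) := by
  have hp : 0 < v (p : K) := by
    rw [h.map_p]
    exact WithTop.coe_lt_coe.2 h.e_pos
  refine maxIdealPow_antitone w ?_ <| algebraMap_mem_maxIdealPow h.map_algebraMap <|
    prod_sub_natCast_div_factorial_mem_maxIdealPow h.prime hp h.m_pos.le
      (mem_maxIdealPow_of_map_eq h.map_μ) hi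
  push_cast
  linarith

theorem toLinearMap_pow_sq_eq_one (h : WittTower p v w e b m a μ x y) (σ : L ≃ₐ[K] L) :
    (σ.toLinearMap : Module.End K L) ^ p ^ 2 = 1 := by
  have : FiniteDimensional K L :=
    .of_finrank_pos (h.finrank_eq ▸ pow_pos h.prime.pos 2)
  rw [← AlgEquiv.pow_toLinearMap, ← h.finrank_eq, pow_finrank_eq_one, AlgEquiv.one_toLinearMap]

variable {Ψ₁ Ψ₂ : Module.End K L}

theorem scaffold_mem_raisingEnd_zero (h : WittTower p v w e b m a μ x y)
    (hσ : σ.toLinearMap ∈ raisingEnd K w 0) (hΨ₂ : Ψ₂ ∈ raisingEnd K w ((p : ℤ) ^ 2 * m + b)) :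
    σ.toLinearMap * truncatedPow p μ Ψ₂ - 1 ∈ raisingEnd K w 0 :=
  mul_sum_smul_pow_sub_one_mem_raisingEnd_zero hσ hΨ₂ (by linarith [h.b_pos])
    fun _ hi => h.coeff_mem hi

theorem scaffold_pow_prime_sub_mem_raisingEnd (h : WittTower p v w e b m a μ x y)
    (hσ : σ.toLinearMap ∈ raisingEnd K w 0) (hΨ₂ : Ψ₂ = (σ ^ p).toLinearMap - 1)
    (hΨ₂b : Ψ₂ ∈ raisingEnd K w ((p : ℤ) ^ 2 * m + b)) :
    (σ.toLinearMap * truncatedPow p μ Ψ₂ - 1) ^ p - Ψ₂ ∈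
      raisingEnd K w ((p : ℤ) ^ 2 * e + p * b - (p - 1) * ((p : ℤ) ^ 2 * m + b)) := by
  have hp := h.two_le
  have hm : 0 ≤ (p : ℤ) ^ 2 * m := mul_nonneg (by positivity) h.m_pos.le
  have hbm : b ≤ (p : ℤ) ^ 2 * m := by
    have hpb := mul_le_mul_of_nonneg_right (by nlinarith : (2 : ℤ) ≤ p ^ 2) h.b_pos.le
    linarith [h.sq_mul_b_le]
  refine raisingEnd_antitone K w (by linarith) <|
    mul_sum_smul_pow_sub_one_pow_prime_sub_mem_raisingEnd h.prime h.natCast_mem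
      (h.toLinearMap_pow_sq_eq_one σ) hσ (by rw [hΨ₂, AlgEquiv.pow_toLinearMap]) hΨ₂b
      (by linarith [h.b_pos]) (by nlinarith) h.mul_sq_mul_m_le (by simp) fun _ hi => h.coeff_mem hi

theorem scaffold_pow_add_mul_pow_sub_mem_raisingEnd (h : WittTower p v w e b m a μ x y)
    (hσx : σ x - x - 1 ∈ maxIdealPow w ((p : ℤ) ^ 2 * b))
    (hσy : σ y - y - wittDefect p x 1 ∈ maxIdealPow w 0)
    (hΨ₂ : Ψ₂ = (σ ^ p).toLinearMap - 1) (hΨ₁ : Ψ₁ = σ.toLinearMap * truncatedPow p μ Ψ₂ - 1)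
    (r s : ℕ) : Ψ₁ ^ (p + r) * Ψ₂ ^ s - Ψ₁ ^ r * Ψ₂ ^ (s + 1) ∈
      raisingEnd K w ((p : ℤ) ^ 2 * e + p * b - (p - 1 - s) * ((p : ℤ) ^ 2 * m + b)) := by
  have hσ := h.toLinearMap_mem_raisingEnd_zero hσx hσy
  have hΨ₂b : Ψ₂ ∈ raisingEnd K w ((p : ℤ) ^ 2 * m + b) :=
    hΨ₂ ▸ h.pow_prime_sub_one_mem_raisingEnd hσx hσ hσy
  have hΨ₁0 : Ψ₁ ∈ raisingEnd K w 0 := hΨ₁ ▸ h.scaffold_mem_raisingEnd_zero hσ hΨ₂b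
  have hdiff := hΨ₁ ▸ h.scaffold_pow_prime_sub_mem_raisingEnd hσ hΨ₂ hΨ₂b
  exact raisingEnd_antitone K w (by linarith)
    (pow_add_mul_pow_sub_mem_raisingEnd hΨ₁0 hΨ₂b hdiff r s)

end WittTower

end WittTower

namespace IsDiscVal

variable {K : Type*} [Field K] {v : K → ℤ} {x : K} {N : ℤ}

open Classical in
/-- The additive valuation with values in `ℤ ∪ {∞}` that agrees with `v` on nonzero elements. -/
noncomputable def addValuation (hv : IsDiscVal v) : AddValuation K (WithTop ℤ) :=
  AddValuation.of (fun x => if x = 0 then ⊤ else (v x : WithTop ℤ)) (if_pos rfl)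
    (by simp [hv.map_one])
    (fun x y => by
      rcases eq_or_ne x 0 with rfl | hx
      · simp
      rcases eq_or_ne y 0 with rfl | hy
      · simp
      rcases eq_or_ne (x + y) 0 with hxy | hxy
      · simp [hxy]
      · simpa only [hx, hy, hxy, if_false, ← WithTop.coe_min, WithTop.coe_le_coe]
          using hv.min_le_add x y hx hy hxy)
    (fun x y => by
      rcases eq_or_ne x 0 with rfl | hx
      · simp
      rcases eq_or_ne y 0 with rfl | hy
      · simp
      simp only [hx, hy, mul_eq_zero, or_self, if_false, hv.map_mul x y hx hy, WithTop.coe_add])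

theorem addValuation_of_ne_zero (hv : IsDiscVal v) (hx : x ≠ 0) : hv.addValuation x = v x :=
  if_neg hx

theorem mem_maxIdealPow_addValuation (hv : IsDiscVal v) :
    x ∈ maxIdealPow hv.addValuation N ↔ x = 0 ∨ N ≤ v x := by
  rcases eq_or_ne x 0 with rfl | hx
  · simp
  · rw [mem_maxIdealPow, hv.addValuation_of_ne_zero hx, WithTop.coe_le_coe, or_iff_right hx]

theorem addValuation_algebraMap {L : Type*} [Field L] [Algebra K L] {w : L → ℤ}
    (hv : IsDiscVal v) (hw : IsDiscVal w) {n : ℕ} (hn : n ≠ 0)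
    (hram : ∀ x : K, x ≠ 0 → w (algebraMap K L x) = n * v x) (x : K) :
    hw.addValuation (algebraMap K L x) = n • hv.addValuation x := by
  rcases eq_or_ne x 0 with rfl | hx
  · obtain ⟨k, rfl⟩ := Nat.exists_eq_succ_of_ne_zero hn
    simp [succ_nsmul]
  · rw [hw.addValuation_of_ne_zero (by simpa using hx), hv.addValuation_of_ne_zero hx, hram x hx,
      ← WithTop.coe_nsmul, nsmul_eq_mul]

end IsDiscVal

theorem statement12_general (p : ℕ) (hp : p.Prime) (K0 K2 : Type*) [Field K0] [Field K2]
    [CharZero K0] [Algebra K0 K2] (hdeg : Module.finrank K0 K2 = p ^ 2)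
    (v0 : K0 → ℤ) (v2 : K2 → ℤ) (hv0 : IsDiscVal v0) (hv2 : IsDiscVal v2)
    (e0 : ℤ) (he0 : e0 = v0 (p : K0))
    (hram : ∀ x : K0, x ≠ 0 → v2 (algebraMap K0 K2 x) = (p : ℤ) ^ 2 * v0 x)
    (a1 μ a2 : K0) (ha1 : a1 ≠ 0) (hμ0 : μ ≠ 0) (hnd : ¬ ((p : ℤ) ∣ v0 a1)) (hneg : v0 a1 < 0)
    (m : ℤ) (hm : m = -v0 μ)
    (hmu1 : (p : ℤ) ^ 2 * (p - 1) * m - (2 * p * (p - 1) + 1) * v0 a1 < (p : ℤ) ^ 2 * e0)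
    (hmu2 : -(((p : ℤ) ^ 2 - 1) * v0 a1) < (p : ℤ) ^ 2 * m)
    (ha2 : a2 = μ ^ p * a1) (x1 x2 : K2) (hx1 : x1 ^ p - x1 = algebraMap K0 K2 a1)
    (hx2 : x2 ^ p - x2 = algebraMap K0 K2 a2 + wittDefect p x1 (algebraMap K0 K2 a1))
    (b1 b2 : ℤ) (hb1 : b1 = -v0 a1) (hb2 : b2 = (p : ℤ) ^ 2 * m + b1)
    (σ1 : K2 ≃ₐ[K0] K2) (ε δ' : K2) (hσ1x1 : σ1 x1 = x1 + 1 + ε)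
    (hε : ε = 0 ∨ (p : ℤ) ^ 2 * b1 ≤ v2 ε) (hσ1x2 : σ1 x2 = x2 + wittDefect p x1 1 + δ')
    (hδ' : δ' = 0 ∨ 0 ≤ v2 δ')
    (Ψ1 Ψ2 : Module.End K0 K2) (hΨ2 : Ψ2 = (σ1 ^ p).toLinearMap - 1)
    (hΨ1 : Ψ1 = σ1.toLinearMap * truncatedPow p μ Ψ2 - 1) (ρ : K2) (hρ : ρ ≠ 0) (r s : ℕ) :
    (Ψ1 ^ (p + r) * Ψ2 ^ s) ρ - (Ψ1 ^ r * Ψ2 ^ (s + 1)) ρ = 0 ∨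
      v2 ρ + ((p : ℤ) ^ 2 * e0 + p * b1 - (p - 1 - s) * b2) ≤
        v2 ((Ψ1 ^ (p + r) * Ψ2 ^ s) ρ - (Ψ1 ^ r * Ψ2 ^ (s + 1)) ρ) := by
  have tower : WittTower p hv0.addValuation hv2.addValuation e0 b1 m a1 μ x1 x2 :=
    { prime := hp
      finrank_eq := hdeg
      map_algebraMap := hv0.addValuation_algebraMap hv2 (pow_ne_zero 2 hp.ne_zero)
        (by simpa using hram)
      map_p := by rw [hv0.addValuation_of_ne_zero (mod_cast hp.ne_zero), he0]
      map_a := by rw [hv0.addValuation_of_ne_zero ha1, hb1, neg_neg]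
      map_μ := by rw [hv0.addValuation_of_ne_zero hμ0, hm, neg_neg]
      b_pos := hb1 ▸ neg_pos.2 hneg
      not_dvd_b := by rwa [hb1, dvd_neg]
      x_pow_sub := hx1
      y_pow_sub := ha2 ▸ hx2
      b_lt_m := by rwa [hb1, mul_neg]
      m_lt_e := by rwa [hb1, mul_neg, ← sub_eq_add_neg] }
  have hσx : σ1 x1 - x1 - 1 ∈ maxIdealPow hv2.addValuation ((p : ℤ) ^ 2 * b1) := by
    rwa [hσ1x1, add_assoc, add_sub_cancel_left, add_sub_cancel_left,
      hv2.mem_maxIdealPow_addValuation]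
  have hσy : σ1 x2 - x2 - wittDefect p x1 1 ∈ maxIdealPow hv2.addValuation 0 := by
    rwa [hσ1x2, add_assoc, add_sub_cancel_left, add_sub_cancel_left,
      hv2.mem_maxIdealPow_addValuation]
  rw [← hv2.mem_maxIdealPow_addValuation, hb2]
  exact apply_mem_maxIdealPow
    (tower.scaffold_pow_add_mul_pow_sub_mem_raisingEnd hσx hσy hΨ2 hΨ1 r s)
    (mem_maxIdealPow_of_map_eq (hv2.addValuation_of_ne_zero hρ))

/-- for `ρ ∈ K₂` with `v₂(ρ) = b₂`,
`Ψ₁^p ρ ≡ (σ₁^p − 1)ρ ≡ Ψ₂ ρ mod 𝔐₂^{p²e₀ + p·b₁ − (p−1)·b₂}` and consequently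
`Ψ₁^{p+r} Ψ₂^s ρ ≡ Ψ₁^r Ψ₂^{s+1} ρ mod 𝔐₂^{p²e₀ + (r+1)p·b₁ − (p−1−s)·b₂}`
for `0 ≤ r,s ≤ p−1`.  Congruence `x ≡ y mod 𝔐₂^N` is encoded as
`x − y = 0 ∨ N ≤ v₂(x − y)`. -/
theorem statement12
    (p : ℕ) (hp : p.Prime)
    (K0 K2 : Type*) [Field K0] [Field K2] [CharZero K0] [CharZero K2]
    [Algebra K0 K2] [IsGalois K0 K2] [FiniteDimensional K0 K2]
    (hdeg : Module.finrank K0 K2 = p ^ 2)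
    (hcyc : IsCyclic (K2 ≃ₐ[K0] K2))
    (v0 : K0 → ℤ) (v2 : K2 → ℤ)
    (hv0 : IsDiscVal v0) (hv2 : IsDiscVal v2)
    (e0 : ℤ) (he0 : e0 = v0 (p : K0)) (he0pos : 1 ≤ e0)
    (hram : ∀ x : K0, x ≠ 0 → v2 (algebraMap K0 K2 x) = (p : ℤ) ^ 2 * v0 x)
    (a1 μ a2 : K0) (ha1 : a1 ≠ 0) (hμ0 : μ ≠ 0)
    (hwitt : ∀ y : K0, y ^ p - y ≠ a1)
    (hnd : ¬ ((p : ℤ) ∣ v0 a1))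
    (hneg : v0 a1 < 0)
    (hbd : -((p : ℤ) * e0) < ((p : ℤ) ^ 2 - 1) * v0 a1)
    (m : ℤ) (hm : m = -v0 μ) (hmpos : 0 < m)
    (hmu1 : (p : ℤ) ^ 2 * (p - 1) * m - (2 * p * (p - 1) + 1) * v0 a1 < (p : ℤ) ^ 2 * e0)
    (hmu2 : -(((p : ℤ) ^ 2 - 1) * v0 a1) < (p : ℤ) ^ 2 * m)
    (ha2 : a2 = μ ^ p * a1)
    (x1 x2 : K2)
    (hx1 : x1 ^ p - x1 = algebraMap K0 K2 a1)
    (hx2 : x2 ^ p - x2 = algebraMap K0 K2 a2 +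
      (x1 ^ p + (algebraMap K0 K2 a1) ^ p - (x1 + algebraMap K0 K2 a1) ^ p) / (p : K2))
    (hgen : Algebra.adjoin K0 {x1, x2} = ⊤)
    (b1 b2 : ℤ) (hb1 : b1 = -v0 a1) (hb2 : b2 = (p : ℤ) ^ 2 * m + b1)
    (σ1 : K2 ≃ₐ[K0] K2) (ε δ' : K2)
    (hσ1x1 : σ1 x1 = x1 + 1 + ε)
    (hε : ε ≠ 0) (hεv : v2 ε = (p : ℤ) ^ 2 * e0 - p * (p - 1) * b1)
    (hσ1x2 : σ1 x2 = x2 + (x1 ^ p + 1 - (x1 + 1) ^ p) / (p : K2) + δ')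
    (hδ' : δ' = 0 ∨ 0 < v2 δ')
    (Ψ1 Ψ2 : Module.End K0 K2)
    (hΨ2 : Ψ2 = ((σ1 ^ p).toLinearMap : Module.End K0 K2) - 1)
    (hΨ1 : Ψ1 = (σ1.toLinearMap : Module.End K0 K2) *
      (∑ i ∈ Finset.range p,
        ((∏ k ∈ Finset.range i, (μ - (k : K0))) / (Nat.factorial i : K0)) • Ψ2 ^ i) - 1) :
    ∀ ρ : K2, ρ ≠ 0 → v2 ρ = b2 →
      ((Ψ1 ^ p) ρ - (((σ1 ^ p).toLinearMap : Module.End K0 K2) ρ - ρ) = 0 ∨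
        (p : ℤ) ^ 2 * e0 + p * b1 - (p - 1) * b2 ≤
          v2 ((Ψ1 ^ p) ρ - (((σ1 ^ p).toLinearMap : Module.End K0 K2) ρ - ρ))) ∧
      ((Ψ1 ^ p) ρ - Ψ2 ρ = 0 ∨
        (p : ℤ) ^ 2 * e0 + p * b1 - (p - 1) * b2 ≤ v2 ((Ψ1 ^ p) ρ - Ψ2 ρ)) ∧
      (∀ r s : ℕ, r ≤ p - 1 → s ≤ p - 1 →
        ((Ψ1 ^ (p + r) * Ψ2 ^ s) ρ - (Ψ1 ^ r * Ψ2 ^ (s + 1)) ρ = 0 ∨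
          (p : ℤ) ^ 2 * e0 + ((r : ℤ) + 1) * p * b1 - ((p : ℤ) - 1 - s) * b2 ≤
            v2 ((Ψ1 ^ (p + r) * Ψ2 ^ s) ρ - (Ψ1 ^ r * Ψ2 ^ (s + 1)) ρ))) := by
  have hb1pos : 0 < b1 := hb1 ▸ neg_pos.2 hneg
  have hεb1 : (p : ℤ) ^ 2 * b1 ≤ v2 ε := by
    linarith [two_mul_sq_mul_le_of_break_bounds (p := p) (e := e0) (m := m)
      (mod_cast hp.two_le) hb1pos (by rwa [hb1, mul_neg])
      (by rwa [hb1, mul_neg, ← sub_eq_add_neg]), mul_pos (mod_cast hp.pos : (0 : ℤ) < p) hb1pos]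
  have hb1b2 : (p : ℤ) ^ 2 * b1 ≤ b2 := by rw [hb2, hb1]; linarith
  intro ρ hρ hρb
  have hscaffold (r s : ℕ) (hr : r ≤ p - 1) :
      (Ψ1 ^ (p + r) * Ψ2 ^ s) ρ - (Ψ1 ^ r * Ψ2 ^ (s + 1)) ρ = 0 ∨
        (p : ℤ) ^ 2 * e0 + ((r : ℤ) + 1) * p * b1 - ((p : ℤ) - 1 - s) * b2 ≤
          v2 ((Ψ1 ^ (p + r) * Ψ2 ^ s) ρ - (Ψ1 ^ r * Ψ2 ^ (s + 1)) ρ) := by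
    have hrp : r * (p * b1) ≤ p * (p * b1) := by gcongr; omega
    exact (statement12_general p hp K0 K2 hdeg v0 v2 hv0 hv2 e0 he0 hram a1 μ a2 ha1 hμ0 hnd hneg
      m hm hmu1 hmu2 ha2 x1 x2 hx1 hx2 b1 b2 hb1 hb2 σ1 ε δ' hσ1x1 (.inr hεb1)
      (by rwa [wittDefect, one_pow]) (hδ'.imp_right le_of_lt) Ψ1 Ψ2 hΨ2 hΨ1 ρ hρ
      r s).imp_right fun h => by linarith
  exact ⟨by simpa [hΨ2] using hscaffold 0 0, by simpa using hscaffold 0 0,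
    fun r s hr _ => hscaffold r s hr⟩
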